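/- Let 1 ≤ q < ∞ and let b ∈ SV satisfy b(t²) ∼ b(t) on (0,∞), with associated functions B₀ and B∞. Assume there exist real numbers γ < 1/q < δ such that u ↦ u^{−γ}·B∞(u) is almost decreasing on (0,1] and u ↦ u^{−δ}·B₀(u) is almost increasing on (0,1] (i.e. ρ_{B∞} < 1/q < π_{B₀}). Then (∫₀^t b(s)^q ds/s)^{1/q} ∼ b(t)·ℓ(t)^{1/q}, with equivalence constants independent of t > 0. -/

import Mathlib

open Set MeasureTheory Real

/-- `f` is almost increasing on `S`: there is `C > 0` with `f s ≤ C * f t` whenever `s ≤ t` in `S`. -/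
def AlmostIncreasingOn (f : ℝ → ℝ) (S : Set ℝ) : Prop :=
  ∃ C > (0:ℝ), ∀ s ∈ S, ∀ t ∈ S, s ≤ t → f s ≤ C * f t

/-- `f` is almost decreasing on `S`: there is `C > 0` with `f t ≤ C * f s` whenever `s ≤ t` in `S`. -/
def AlmostDecreasingOn (f : ℝ → ℝ) (S : Set ℝ) : Prop :=
  ∃ C > (0:ℝ), ∀ s ∈ S, ∀ t ∈ S, s ≤ t → f t ≤ C * f s

/-- A measurable positive function `b` on `(0,∞)` is slowly varying if for every `ε > 0`,
`t ↦ t^ε * b t` is almost increasing and `t ↦ t^(-ε) * b t` is almost decreasing on `(0,∞)`. -/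
def SlowlyVarying (b : ℝ → ℝ) : Prop :=
  Measurable b ∧ (∀ t ∈ Ioi (0:ℝ), 0 < b t) ∧
  ∀ ε > (0:ℝ), AlmostIncreasingOn (fun t => t ^ ε * b t) (Ioi 0) ∧
    AlmostDecreasingOn (fun t => t ^ (-ε) * b t) (Ioi 0)

/-- `f ∼ g` on `S`: there are `c, C > 0` with `c * g x ≤ f x ≤ C * g x` for all `x ∈ S`. -/
def EquivOn (f g : ℝ → ℝ) (S : Set ℝ) : Prop :=
  ∃ c > (0:ℝ), ∃ C > (0:ℝ), ∀ x ∈ S, c * g x ≤ f x ∧ f x ≤ C * g x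

/-- The associated function `B₀(u) = b(e^{1 - 1/u})`. -/
noncomputable def assocB0 (b : ℝ → ℝ) (u : ℝ) : ℝ := b (Real.exp (1 - 1 / u))

/-- The associated function `B∞(u) = b(e^{1/u - 1})`. -/
noncomputable def assocBinf (b : ℝ → ℝ) (u : ℝ) : ℝ := b (Real.exp (1 / u - 1))

/-- `ℓ(t) = 1 + |log t|`. -/
noncomputable def ell (t : ℝ) : ℝ := 1 + |Real.log t|

/-- The sequence `λ_k`: `λ_k = e^{1 - e^{-k}}` for `k ≤ -1` and `λ_k = e^{e^k - 1}` for `k ≥ 0`. -/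
noncomputable def lam (k : ℤ) : ℝ :=
  if k < 0 then Real.exp (1 - Real.exp (-(k : ℝ))) else Real.exp (Real.exp (k : ℝ) - 1)

/-!
In the variable `1 / u = ℓ(t)` the two index conditions say that `ℓ ^ δ * b` is almost increasing on
`(0,1]` and `ℓ ^ γ * b` is almost increasing on `[1,∞)`.

Upper bound: for `s ≤ t ≤ 1` this bounds `b(s)^q` by a multiple of
`b(t)^q * (ℓ(t) / ℓ(s)) ^ (δ * q)`, and `ℓ ^ (-δ * q)` is integrable at `0` for `ds/s` because
`δ * q > 1`. On `[1,t]` the same estimate with `γ * q < 1` leaves an integral dominated by its upper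
endpoint.

Lower bound: on the part of `(0,t)` within logarithmic distance `ℓ(t) / 2` of `t`, the values of `b`
dominate a multiple of `b(t)`. Almost monotonicity bounds `b(s)` from below only by values of `b` to
the left of `s`; the condition `b(t²) ∼ b(t)` carries `b(t)` across to the left end of that
interval, and slow variation absorbs a bounded factor `e` in the argument.
-/

section AlmostMonotone

variable {f g φ : ℝ → ℝ} {S T : Set ℝ}

theorem AlmostIncreasingOn.congr (hf : AlmostIncreasingOn f S) (hfg : EqOn f g S) :
    AlmostIncreasingOn g S := by
  obtain ⟨C, hC, h⟩ := hf
  refine ⟨C, hC, fun s hs t ht hst => ?_⟩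
  rw [← hfg hs, ← hfg ht]
  exact h s hs t ht hst

theorem AlmostIncreasingOn.comp_monotoneOn (hf : AlmostIncreasingOn f S) (hφ : MonotoneOn φ T)
    (hmaps : MapsTo φ T S) : AlmostIncreasingOn (fun t => f (φ t)) T := by
  obtain ⟨C, hC, h⟩ := hf
  exact ⟨C, hC, fun s hs t ht hst => h _ (hmaps hs) _ (hmaps ht) (hφ hs ht hst)⟩

theorem AlmostDecreasingOn.comp_antitoneOn (hf : AlmostDecreasingOn f S) (hφ : AntitoneOn φ T)
    (hmaps : MapsTo φ T S) : AlmostIncreasingOn (fun t => f (φ t)) T := by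
  obtain ⟨C, hC, h⟩ := hf
  exact ⟨C, hC, fun s hs t ht hst => h _ (hmaps ht) _ (hmaps hs) (hφ hs ht hst)⟩

theorem AlmostIncreasingOn.rpow (hf : AlmostIncreasingOn f S) (hf₀ : ∀ t ∈ S, 0 ≤ f t) {q : ℝ}
    (hq : 0 ≤ q) : AlmostIncreasingOn (fun t => f t ^ q) S := by
  obtain ⟨C, hC, h⟩ := hf
  refine ⟨C ^ q, by positivity, fun s hs t ht hst => ?_⟩
  rw [← mul_rpow hC.le (hf₀ t ht)]
  exact rpow_le_rpow (hf₀ s hs) (h s hs t ht hst) hq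

theorem AlmostDecreasingOn.exists_comp_mul_left_le {ε c : ℝ} (hc : 1 ≤ c)
    (hf : AlmostDecreasingOn (fun t => t ^ (-ε) * f t) (Ioi 0)) :
    ∃ C > (0 : ℝ), ∀ t > (0 : ℝ), f (c * t) ≤ C * f t := by
  obtain ⟨C, hC, h⟩ := hf
  have hc₀ : 0 < c := one_pos.trans_le hc
  refine ⟨C * c ^ ε, by positivity, fun t ht => ?_⟩
  have hct : (c * t) ^ (-ε) * f (c * t) ≤ C * (t ^ (-ε) * f t) :=
    h t ht (c * t) (mul_pos hc₀ ht) (le_mul_of_one_le_left ht.le hc)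
  rw [mul_rpow hc₀.le ht.le, rpow_neg hc₀.le] at hct
  refine le_of_mul_le_mul_left ?_ (show 0 < (c ^ ε)⁻¹ * t ^ (-ε) by positivity)
  calc (c ^ ε)⁻¹ * t ^ (-ε) * f (c * t) ≤ C * (t ^ (-ε) * f t) := hct
    _ = (c ^ ε)⁻¹ * t ^ (-ε) * (C * c ^ ε * f t) := by field_simp

end AlmostMonotone

section LogarithmicWeight

variable {t : ℝ}

theorem one_le_ell (t : ℝ) : 1 ≤ ell t :=
  le_add_of_nonneg_right (abs_nonneg _)

theorem ell_pos (t : ℝ) : 0 < ell t :=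
  one_pos.trans_le (one_le_ell t)

theorem ell_one : ell 1 = 1 := by
  simp [ell]

theorem ell_of_mem_Ioc (ht : t ∈ Ioc 0 1) : ell t = 1 - log t := by
  rw [ell, abs_of_nonpos (log_nonpos ht.1.le ht.2), sub_eq_add_neg]

theorem ell_of_one_le (ht : 1 ≤ t) : ell t = 1 + log t := by
  rw [ell, abs_of_nonneg (log_nonneg ht)]

theorem antitoneOn_ell : AntitoneOn ell (Ioc 0 1) := fun s hs t ht hst => by
  rw [ell_of_mem_Ioc hs, ell_of_mem_Ioc ht]
  exact sub_le_sub_left (log_le_log hs.1 hst) 1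

theorem monotoneOn_ell : MonotoneOn ell (Ici 1) := fun s hs t ht hst => by
  rw [ell_of_one_le hs, ell_of_one_le ht]
  exact add_le_add_right (log_le_log (one_pos.trans_le hs) hst) 1

theorem inv_ell_mem_Ioc (t : ℝ) : (ell t)⁻¹ ∈ Ioc (0 : ℝ) 1 :=
  ⟨inv_pos.2 (ell_pos t), inv_le_one_of_one_le₀ (one_le_ell t)⟩

theorem assocB0_inv_ell (b : ℝ → ℝ) (ht : t ∈ Ioc 0 1) : assocB0 b (ell t)⁻¹ = b t := by
  rw [assocB0, one_div, inv_inv, ell_of_mem_Ioc ht, sub_sub_cancel, exp_log ht.1]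

theorem assocBinf_inv_ell (b : ℝ → ℝ) (ht : 1 ≤ t) : assocBinf b (ell t)⁻¹ = b t := by
  rw [assocBinf, one_div, inv_inv, ell_of_one_le ht, add_sub_cancel_left,
    exp_log (one_pos.trans_le ht)]

theorem inv_ell_rpow_neg (t α : ℝ) : (ell t)⁻¹ ^ (-α) = ell t ^ α := by
  rw [inv_rpow (ell_pos t).le, ← rpow_neg (ell_pos t).le, neg_neg]

theorem AlmostIncreasingOn.ell_rpow_mul_of_assocB0 {b : ℝ → ℝ} {δ : ℝ}
    (h : AlmostIncreasingOn (fun u => u ^ (-δ) * assocB0 b u) (Ioc 0 1)) :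
    AlmostIncreasingOn (fun t => ell t ^ δ * b t) (Ioc 0 1) := by
  have hmono : MonotoneOn (fun t => (ell t)⁻¹) (Ioc 0 1) := fun s hs t ht hst =>
    inv_anti₀ (ell_pos t) (antitoneOn_ell hs ht hst)
  refine (h.comp_monotoneOn hmono fun t _ => inv_ell_mem_Ioc t).congr fun t ht => ?_
  simp only [inv_ell_rpow_neg, assocB0_inv_ell b ht]

theorem AlmostDecreasingOn.almostIncreasingOn_ell_rpow_mul {b : ℝ → ℝ} {γ : ℝ}
    (h : AlmostDecreasingOn (fun u => u ^ (-γ) * assocBinf b u) (Ioc 0 1)) :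
    AlmostIncreasingOn (fun t => ell t ^ γ * b t) (Ici 1) := by
  have hanti : AntitoneOn (fun t => (ell t)⁻¹) (Ici 1) := fun s hs t ht hst =>
    inv_anti₀ (ell_pos s) (monotoneOn_ell hs ht hst)
  refine (h.comp_antitoneOn hanti fun t _ => inv_ell_mem_Ioc t).congr fun t ht => ?_
  simp only [inv_ell_rpow_neg, assocBinf_inv_ell b ht]

theorem AlmostIncreasingOn.ell_rpow_mul_rpow {b : ℝ → ℝ} {α q : ℝ} {S : Set ℝ}
    (h : AlmostIncreasingOn (fun t => ell t ^ α * b t) S) (hb : ∀ t ∈ S, 0 ≤ b t) (hq : 0 ≤ q) :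
    AlmostIncreasingOn (fun t => ell t ^ (α * q) * b t ^ q) S := by
  have hnonneg : ∀ t ∈ S, 0 ≤ ell t ^ α * b t := fun t ht =>
    mul_nonneg (rpow_nonneg (ell_pos t).le α) (hb t ht)
  refine (h.rpow hnonneg hq).congr fun t ht => ?_
  simp only [mul_rpow (rpow_nonneg (ell_pos t).le α) (hb t ht), ← rpow_mul (ell_pos t).le]

end LogarithmicWeight

section LogarithmicIntegrals

theorem setLIntegral_div_eq_setLIntegral_exp (f : ℝ → ℝ) {S : Set ℝ} (hS : MeasurableSet S)
    (hS₀ : S ⊆ Ioi 0) :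
    ∫⁻ s in S, ENNReal.ofReal (f s / s) = ∫⁻ x in exp ⁻¹' S, ENNReal.ofReal (f (exp x)) := by
  have himage : exp '' (exp ⁻¹' S) = S :=
    image_preimage_eq_of_subset (by rwa [range_exp])
  conv_lhs => rw [← himage]
  rw [lintegral_image_eq_lintegral_abs_deriv_mul (measurable_exp hS)
    (fun x _ => (hasDerivAt_exp x).hasDerivWithinAt) exp_injective.injOn]
  refine lintegral_congr fun x => ?_
  rw [← ENNReal.ofReal_mul (abs_nonneg _), abs_of_pos (exp_pos x),
    mul_div_cancel₀ _ (exp_pos x).ne']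

theorem lintegral_Ioo_const_div {c x y : ℝ} (hc : 0 ≤ c) (hx : 0 < x) (hy : 0 < y) :
    ∫⁻ s in Ioo x y, ENNReal.ofReal (c / s) = ENNReal.ofReal (c * (log y - log x)) := by
  have hpre : exp ⁻¹' Ioo x y = Ioo (log x) (log y) := by
    ext z
    simp only [mem_preimage, mem_Ioo, log_lt_iff_lt_exp hx, lt_log_iff_exp_lt hy]
  rw [setLIntegral_div_eq_setLIntegral_exp (fun _ => c) measurableSet_Ioo
    fun s hs => hx.trans hs.1, hpre, setLIntegral_const, Real.volume_Ioo, ENNReal.ofReal_mul hc]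

theorem lintegral_Ioo_ell_rpow_neg_div {p t : ℝ} (hp : 1 < p) (ht : t ∈ Ioc 0 1) :
    ∫⁻ s in Ioo 0 t, ENNReal.ofReal (ell s ^ (-p) / s)
      = ENNReal.ofReal (ell t ^ (1 - p) / (p - 1)) := by
  have hpre : exp ⁻¹' Ioo 0 t = (fun x => 1 - x) ⁻¹' Ioi (ell t) := by
    ext x
    simp only [mem_preimage, mem_Ioo, mem_Ioi, exp_pos, true_and, ell_of_mem_Ioc ht,
      sub_lt_sub_iff_left, lt_log_iff_exp_lt ht.1]
  calc ∫⁻ s in Ioo 0 t, ENNReal.ofReal (ell s ^ (-p) / s)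
      = ∫⁻ s in Ioo 0 t, ENNReal.ofReal ((1 - log s) ^ (-p) / s) :=
        setLIntegral_congr_fun measurableSet_Ioo fun s hs => by
          simp only [ell_of_mem_Ioc ⟨hs.1, hs.2.le.trans ht.2⟩]
    _ = ∫⁻ x in (fun x => 1 - x) ⁻¹' Ioi (ell t), ENNReal.ofReal ((1 - x) ^ (-p)) := by
        rw [setLIntegral_div_eq_setLIntegral_exp (fun s => (1 - log s) ^ (-p)) measurableSet_Ioo
          fun s hs => hs.1, hpre]
        simp only [log_exp]
    _ = ∫⁻ z in Ioi (ell t), ENNReal.ofReal (z ^ (-p)) :=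
        (volume.measurePreserving_sub_left (1 : ℝ)).setLIntegral_comp_preimage_emb
          (MeasurableEquiv.subLeft (1 : ℝ)).measurableEmbedding
          (fun z => ENNReal.ofReal (z ^ (-p))) _
    _ = ENNReal.ofReal (∫ z in Ioi (ell t), z ^ (-p)) :=
        (ofReal_integral_eq_lintegral_ofReal
          (integrableOn_Ioi_rpow_of_lt (neg_lt_neg hp) (ell_pos t))
          (ae_restrict_of_forall_mem measurableSet_Ioi fun z hz =>
            rpow_nonneg ((ell_pos t).trans hz).le _)).symm
    _ = ENNReal.ofReal (ell t ^ (1 - p) / (p - 1)) := by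
        rw [integral_Ioi_rpow_of_lt (neg_lt_neg hp) (ell_pos t), neg_add_eq_sub, neg_div,
          ← div_neg, neg_sub]

theorem lintegral_Ico_rpow_neg_le {p y : ℝ} (hp : p < 1) (hy : 1 ≤ y) :
    ∫⁻ z in Ico 1 y, ENNReal.ofReal (z ^ (-p)) ≤ ENNReal.ofReal (y ^ (1 - p) / (1 - p)) := by
  have hp' : -1 < -p := neg_lt_neg hp
  have hint : IntegrableOn (fun z : ℝ => z ^ (-p)) (Ioc 1 y) :=
    (intervalIntegrable_iff_integrableOn_Ioc_of_le hy).1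
      (intervalIntegral.intervalIntegrable_rpow' hp')
  rw [restrict_Ico_eq_restrict_Ioc, ← ofReal_integral_eq_lintegral_ofReal hint
      (ae_restrict_of_forall_mem measurableSet_Ioc fun z hz =>
        rpow_nonneg (one_pos.trans hz.1).le _),
    ← intervalIntegral.integral_of_le hy, integral_rpow (Or.inl hp'), neg_add_eq_sub, one_rpow]
  exact ENNReal.ofReal_le_ofReal (div_le_div_of_nonneg_right (sub_le_self _ zero_le_one)
    (sub_nonneg.2 hp.le))

theorem lintegral_Ico_ell_rpow_neg_div_le {p t : ℝ} (hp : p < 1) (ht : 1 ≤ t) :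
    ∫⁻ s in Ico 1 t, ENNReal.ofReal (ell s ^ (-p) / s)
      ≤ ENNReal.ofReal (ell t ^ (1 - p) / (1 - p)) := by
  have ht₀ : 0 < t := one_pos.trans_le ht
  have hpre : exp ⁻¹' Ico 1 t = (fun x => 1 + x) ⁻¹' Ico 1 (ell t) := by
    ext x
    simp only [mem_preimage, mem_Ico, one_le_exp_iff, le_add_iff_nonneg_right, ell_of_one_le ht,
      add_lt_add_iff_left, lt_log_iff_exp_lt ht₀]
  calc ∫⁻ s in Ico 1 t, ENNReal.ofReal (ell s ^ (-p) / s)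
      = ∫⁻ s in Ico 1 t, ENNReal.ofReal ((1 + log s) ^ (-p) / s) :=
        setLIntegral_congr_fun measurableSet_Ico fun s hs => by
          simp only [ell_of_one_le hs.1]
    _ = ∫⁻ x in (fun x => 1 + x) ⁻¹' Ico 1 (ell t), ENNReal.ofReal ((1 + x) ^ (-p)) := by
        rw [setLIntegral_div_eq_setLIntegral_exp (fun s => (1 + log s) ^ (-p)) measurableSet_Ico
          fun s hs => one_pos.trans_le hs.1, hpre]
        simp only [log_exp]
    _ = ∫⁻ z in Ico 1 (ell t), ENNReal.ofReal (z ^ (-p)) :=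
        (measurePreserving_add_left volume (1 : ℝ)).setLIntegral_comp_preimage_emb
          (MeasurableEquiv.addLeft (1 : ℝ)).measurableEmbedding
          (fun z => ENNReal.ofReal (z ^ (-p))) _
    _ ≤ ENNReal.ofReal (ell t ^ (1 - p) / (1 - p)) :=
        lintegral_Ico_rpow_neg_le hp (one_le_ell t)

end LogarithmicIntegrals

section UpperBound

variable {g : ℝ → ℝ} {p r : ℝ}

theorem AlmostIncreasingOn.exists_lintegral_div_le_of_lintegral_ell_rpow_neg_le {S : Set ℝ}
    (h : AlmostIncreasingOn (fun t => ell t ^ p * g t) S) (hg : ∀ t ∈ S, 0 ≤ g t)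
    (hS : S ⊆ Ioi 0) {K : ℝ} (hK : 0 < K) :
    ∃ C > (0 : ℝ), ∀ t ∈ S, ∀ A ⊆ S ∩ Iic t, MeasurableSet A →
      ∫⁻ s in A, ENNReal.ofReal (ell s ^ (-p) / s) ≤ ENNReal.ofReal (ell t ^ (1 - p) / K) →
      ∫⁻ s in A, ENNReal.ofReal (g s / s) ≤ ENNReal.ofReal (C * (g t * ell t)) := by
  obtain ⟨C, hC, h⟩ := h
  refine ⟨C / K, by positivity, fun t ht A hA hAm hint => ?_⟩
  have hgt := hg t ht
  have hℓ := ell_pos t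
  have hM : 0 ≤ C * (ell t ^ p * g t) := by positivity
  have hpointwise : ∀ s ∈ A, g s / s ≤ C * (ell t ^ p * g t) * (ell s ^ (-p) / s) := by
    intro s hs
    have hs₀ : 0 < s := hS (hA hs).1
    have hℓs := ell_pos s
    rw [← mul_div_assoc, rpow_neg hℓs.le, ← div_eq_mul_inv]
    gcongr
    rw [le_div_iff₀' (by positivity)]
    exact h s (hA hs).1 t ht (hA hs).2
  calc ∫⁻ s in A, ENNReal.ofReal (g s / s)
      ≤ ∫⁻ s in A, ENNReal.ofReal (C * (ell t ^ p * g t)) * ENNReal.ofReal (ell s ^ (-p) / s) :=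
        setLIntegral_mono' hAm fun s hs => by
          rw [← ENNReal.ofReal_mul hM]
          exact ENNReal.ofReal_le_ofReal (hpointwise s hs)
    _ ≤ ENNReal.ofReal (C * (ell t ^ p * g t)) * ENNReal.ofReal (ell t ^ (1 - p) / K) := by
        rw [lintegral_const_mul' _ _ ENNReal.ofReal_ne_top]
        gcongr
    _ = ENNReal.ofReal (C / K * (g t * ell t)) := by
        rw [← ENNReal.ofReal_mul hM, rpow_sub hℓ, rpow_one]
        congr 1
        field_simp

theorem AlmostIncreasingOn.exists_lintegral_Ioo_div_le
    (h : AlmostIncreasingOn (fun t => ell t ^ p * g t) (Ioc 0 1)) (hg : ∀ t ∈ Ioc 0 1, 0 ≤ g t)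
    (hp : 1 < p) :
    ∃ C > (0 : ℝ), ∀ t ∈ Ioc (0 : ℝ) 1,
      ∫⁻ s in Ioo 0 t, ENNReal.ofReal (g s / s) ≤ ENNReal.ofReal (C * (g t * ell t)) := by
  obtain ⟨C, hC, hle⟩ := h.exists_lintegral_div_le_of_lintegral_ell_rpow_neg_le hg
    Ioc_subset_Ioi_self (sub_pos.2 hp)
  exact ⟨C, hC, fun t ht => hle t ht _ (fun s hs => ⟨⟨hs.1, hs.2.le.trans ht.2⟩, hs.2.le⟩)
    measurableSet_Ioo (lintegral_Ioo_ell_rpow_neg_div hp ht).le⟩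

theorem AlmostIncreasingOn.exists_lintegral_Ico_div_le
    (h : AlmostIncreasingOn (fun t => ell t ^ p * g t) (Ici 1)) (hg : ∀ t ∈ Ici 1, 0 ≤ g t)
    (hp : p < 1) :
    ∃ C > (0 : ℝ), ∀ t ∈ Ici (1 : ℝ),
      ∫⁻ s in Ico 1 t, ENNReal.ofReal (g s / s) ≤ ENNReal.ofReal (C * (g t * ell t)) := by
  obtain ⟨C, hC, hle⟩ := h.exists_lintegral_div_le_of_lintegral_ell_rpow_neg_le hg
    (Ici_subset_Ioi.2 one_pos) (sub_pos.2 hp)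
  exact ⟨C, hC, fun t ht => hle t ht _ (fun s hs => ⟨hs.1, hs.2.le⟩) measurableSet_Ico
    (lintegral_Ico_ell_rpow_neg_div_le hp ht)⟩

theorem AlmostIncreasingOn.exists_apply_one_le
    (h : AlmostIncreasingOn (fun t => ell t ^ p * g t) (Ici 1)) (hg : ∀ t ∈ Ici 1, 0 ≤ g t)
    (hp : p ≤ 1) :
    ∃ C > (0 : ℝ), ∀ t ∈ Ici (1 : ℝ), g 1 ≤ C * (g t * ell t) := by
  obtain ⟨C, hC, h⟩ := h
  refine ⟨C, hC, fun t ht => ?_⟩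
  have hgt := hg t ht
  calc g 1 = ell 1 ^ p * g 1 := by rw [ell_one, one_rpow, one_mul]
    _ ≤ C * (ell t ^ p * g t) := h 1 self_mem_Ici t ht ht
    _ ≤ C * (ell t * g t) := by
        gcongr
        exact rpow_le_self_of_one_le (one_le_ell t) hp
    _ = C * (g t * ell t) := by rw [mul_comm (ell t)]

theorem exists_lintegral_Ioo_zero_div_le (hg : ∀ t ∈ Ioi 0, 0 ≤ g t)
    (h₀ : AlmostIncreasingOn (fun t => ell t ^ r * g t) (Ioc 0 1)) (hr : 1 < r)
    (h_inf : AlmostIncreasingOn (fun t => ell t ^ p * g t) (Ici 1)) (hp : p < 1) :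
    ∃ C > (0 : ℝ), ∀ t ∈ Ioi (0 : ℝ),
      ∫⁻ s in Ioo 0 t, ENNReal.ofReal (g s / s) ≤ ENNReal.ofReal (C * (g t * ell t)) := by
  have hg_inf : ∀ t ∈ Ici 1, 0 ≤ g t := fun t ht => hg t (one_pos.trans_le (mem_Ici.1 ht))
  obtain ⟨C₀, hC₀, hle₀⟩ := h₀.exists_lintegral_Ioo_div_le (fun t ht => hg t ht.1) hr
  obtain ⟨C₁, hC₁, hle₁⟩ := h_inf.exists_lintegral_Ico_div_le hg_inf hp
  obtain ⟨D, hD, hone⟩ := h_inf.exists_apply_one_le hg_inf hp.le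
  refine ⟨C₀ + (C₀ * D + C₁), by positivity, fun t ht => ?_⟩
  have hX : 0 ≤ g t * ell t := mul_nonneg (hg t ht) (ell_pos t).le
  rcases le_or_gt t 1 with ht₁ | ht₁
  · refine (hle₀ t ⟨ht, ht₁⟩).trans (ENNReal.ofReal_le_ofReal ?_)
    gcongr
    exact le_add_of_nonneg_right (by positivity)
  · rw [← Ioo_union_Ico_eq_Ioo one_pos ht₁.le]
    calc ∫⁻ s in Ioo 0 1 ∪ Ico 1 t, ENNReal.ofReal (g s / s)
        ≤ ENNReal.ofReal (C₀ * (g 1 * ell 1)) + ENNReal.ofReal (C₁ * (g t * ell t)) :=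
          (lintegral_union_le _ _ _).trans
            (add_le_add (hle₀ 1 ⟨one_pos, le_rfl⟩) (hle₁ t ht₁.le))
      _ = ENNReal.ofReal (C₀ * g 1 + C₁ * (g t * ell t)) := by
          have hg₁ := hg 1 (mem_Ioi.2 one_pos)
          rw [ell_one, mul_one, ENNReal.ofReal_add (by positivity) (by positivity)]
      _ ≤ ENNReal.ofReal ((C₀ + (C₀ * D + C₁)) * (g t * ell t)) := by
          refine ENNReal.ofReal_le_ofReal ?_
          have hg₁ : C₀ * g 1 ≤ C₀ * (D * (g t * ell t)) := by
            gcongr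
            exact hone t ht₁.le
          linarith [mul_nonneg hC₀.le hX]

end UpperBound

section LowerBound

theorem rpow_le_rpow_abs_mul_rpow {v w K a : ℝ} (hv : 0 < v) (hw : 0 < w) (hK : 0 < K)
    (hvw : v ≤ K * w) (hwv : w ≤ K * v) : v ^ a ≤ K ^ |a| * w ^ a := by
  rcases le_total 0 a with ha | ha
  · rw [abs_of_nonneg ha, ← mul_rpow hK.le hw.le]
    exact rpow_le_rpow hv.le hvw ha
  · rw [abs_of_nonpos ha, rpow_neg hK.le, ← inv_rpow hK.le, ← mul_rpow (inv_pos.2 hK).le hw.le]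
    exact rpow_le_rpow_of_nonpos (by positivity) ((inv_mul_le_iff₀ hK).2 hwv) ha

variable {b : ℝ → ℝ} {ε γ δ : ℝ}

theorem AlmostIncreasingOn.exists_le_mul_of_ell_le {S : Set ℝ} {α K : ℝ}
    (h : AlmostIncreasingOn (fun t => ell t ^ α * b t) S) (hb : ∀ t ∈ S, 0 ≤ b t) (hK : 0 < K) :
    ∃ C > (0 : ℝ), ∀ s ∈ S, ∀ t ∈ S, s ≤ t → ell s ≤ K * ell t → ell t ≤ K * ell s →
      b s ≤ C * b t := by
  obtain ⟨C, hC, h⟩ := h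
  refine ⟨C * K ^ |α|, by positivity, fun s hs t ht hst hℓst hℓts => ?_⟩
  have hbt := hb t ht
  refine le_of_mul_le_mul_left ?_ (rpow_pos_of_pos (ell_pos s) α)
  calc ell s ^ α * b s ≤ C * (ell t ^ α * b t) := h s hs t ht hst
    _ ≤ C * (K ^ |α| * ell s ^ α * b t) := by
        gcongr
        exact rpow_le_rpow_abs_mul_rpow (ell_pos t) (ell_pos s) hK hℓts hℓst
    _ = ell s ^ α * (C * K ^ |α| * b t) := by ring

theorem exists_le_mul_of_mem_Icc_mul_exp_neg_of_le_one (hb : ∀ t ∈ Ioi 0, 0 ≤ b t)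
    (hdec : AlmostDecreasingOn (fun t => t ^ (-ε) * b t) (Ioi 0))
    (hsq : EquivOn (fun t => b (t ^ 2)) b (Ioi 0))
    (h₀ : AlmostIncreasingOn (fun t => ell t ^ δ * b t) (Ioc 0 1)) :
    ∃ C > (0 : ℝ), ∀ t ∈ Ioc (0 : ℝ) 1, ∀ s ∈ Icc (t * exp (-ell t)) t, b t ≤ C * b s := by
  obtain ⟨c, hc, _, _, hsq⟩ := hsq
  obtain ⟨D, hD, hdec⟩ := hdec.exists_comp_mul_left_le (one_le_exp zero_le_one)
  obtain ⟨C, hC, h₀⟩ := h₀.exists_le_mul_of_ell_le (fun t ht => hb t ht.1) two_pos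
  refine ⟨c⁻¹ * (D * C), by positivity, fun t ht s hs => ?_⟩
  set a := t * exp (-ell t) with ha
  have ha₀ : 0 < a := mul_pos ht.1 (exp_pos _)
  have hs_mem : s ∈ Ioc 0 1 := ⟨ha₀.trans_le hs.1, hs.2.trans ht.2⟩
  have ha_mem : a ∈ Ioc 0 1 := ⟨ha₀, hs.1.trans hs_mem.2⟩
  have hsq_eq : t ^ 2 = exp 1 * a := by
    rw [ha, ell_of_mem_Ioc ht, neg_sub, exp_sub, exp_log ht.1]
    field_simp
  have hℓa : ell a = 2 * ell t := by
    rw [ell_of_mem_Ioc ha_mem, ha, log_mul ht.1.ne' (exp_pos _).ne', log_exp, ell_of_mem_Ioc ht]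
    ring
  have hℓs : ell t ≤ ell s := antitoneOn_ell hs_mem ht hs.2
  have hℓsa : ell s ≤ ell a := antitoneOn_ell ha_mem hs_mem hs.1
  calc b t ≤ c⁻¹ * b (t ^ 2) := (le_inv_mul_iff₀ hc).2 (hsq t ht.1).1
    _ ≤ c⁻¹ * (D * b a) := by
        gcongr
        exact hsq_eq ▸ hdec a ha₀
    _ ≤ c⁻¹ * (D * (C * b s)) := by
        gcongr
        exact h₀ a ha_mem s hs_mem hs.1 (by linarith) (by linarith [ell_pos a])
    _ = c⁻¹ * (D * C) * b s := by ring

theorem exists_le_mul_of_mem_Icc_mul_exp_neg_of_one_le (hb : ∀ t ∈ Ioi 0, 0 ≤ b t)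
    (hdec : AlmostDecreasingOn (fun t => t ^ (-ε) * b t) (Ioi 0))
    (hsq : EquivOn (fun t => b (t ^ 2)) b (Ioi 0))
    (h_inf : AlmostIncreasingOn (fun t => ell t ^ γ * b t) (Ici 1)) :
    ∃ C > (0 : ℝ), ∀ t ∈ Ici (1 : ℝ), ∀ s ∈ Icc (t * exp (-(ell t / 2))) t, b t ≤ C * b s := by
  obtain ⟨_, _, B, hB, hsq⟩ := hsq
  obtain ⟨D, hD, hdec⟩ := hdec.exists_comp_mul_left_le (one_le_exp zero_le_one)
  obtain ⟨C, hC, h_inf⟩ := h_inf.exists_le_mul_of_ell_le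
    (fun t ht => hb t (one_pos.trans_le (mem_Ici.1 ht))) two_pos
  refine ⟨B * (C * D), by positivity, fun t ht s hs => ?_⟩
  have ht₀ : 0 < t := one_pos.trans_le ht
  have hs₀ : 0 < s := (mul_pos ht₀ (exp_pos _)).trans_le hs.1
  have hr : 1 ≤ √t := one_le_sqrt.2 ht
  have hlog_left : log t - ell t / 2 ≤ log s := by
    simpa only [log_mul ht₀.ne' (exp_pos _).ne', log_exp, ← sub_eq_add_neg]
      using log_le_log (mul_pos ht₀ (exp_pos _)) hs.1
  have hlog_right : log s ≤ log t := log_le_log hs₀ hs.2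
  have hlog_es : log (exp 1 * s) = 1 + log s := by
    rw [log_mul (exp_pos _).ne' hs₀.ne', log_exp]
  have hr_le : √t ≤ exp 1 * s := by
    rw [← log_le_log_iff (one_pos.trans_le hr) (by positivity), log_sqrt ht₀.le, hlog_es]
    linarith [ell_of_one_le ht]
  have hes : 1 ≤ exp 1 * s := hr.trans hr_le
  have hℓ_le : ell √t ≤ ell (exp 1 * s) := monotoneOn_ell hr hes hr_le
  have hℓ_ge : ell (exp 1 * s) ≤ 2 * ell √t := by
    rw [ell_of_one_le hes, ell_of_one_le hr, hlog_es, log_sqrt ht₀.le]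
    linarith
  calc b t = b (√t ^ 2) := by rw [sq_sqrt ht₀.le]
    _ ≤ B * b √t := (hsq √t (one_pos.trans_le hr)).2
    _ ≤ B * (C * b (exp 1 * s)) := by
        gcongr
        exact h_inf _ hr _ hes hr_le (by linarith [ell_pos √t]) hℓ_ge
    _ ≤ B * (C * (D * b s)) := by
        gcongr
        exact hdec s hs₀
    _ = B * (C * D) * b s := by ring

theorem exists_le_mul_of_mem_Icc_mul_exp_neg (hb : ∀ t ∈ Ioi 0, 0 ≤ b t)
    (hdec : AlmostDecreasingOn (fun t => t ^ (-ε) * b t) (Ioi 0))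
    (hsq : EquivOn (fun t => b (t ^ 2)) b (Ioi 0))
    (h₀ : AlmostIncreasingOn (fun t => ell t ^ δ * b t) (Ioc 0 1))
    (h_inf : AlmostIncreasingOn (fun t => ell t ^ γ * b t) (Ici 1)) :
    ∃ C > (0 : ℝ), ∀ t ∈ Ioi (0 : ℝ), ∀ s ∈ Icc (t * exp (-(ell t / 2))) t, b t ≤ C * b s := by
  obtain ⟨C₀, hC₀, hle₀⟩ := exists_le_mul_of_mem_Icc_mul_exp_neg_of_le_one hb hdec hsq h₀
  obtain ⟨C₁, -, hle₁⟩ := exists_le_mul_of_mem_Icc_mul_exp_neg_of_one_le hb hdec hsq h_inf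
  refine ⟨max C₀ C₁, lt_max_of_lt_left hC₀, fun t ht s hs => ?_⟩
  have hbs : 0 ≤ b s := hb s ((mul_pos ht (exp_pos _)).trans_le hs.1)
  rcases le_total t 1 with ht₁ | ht₁
  · have hleft : t * exp (-ell t) ≤ t * exp (-(ell t / 2)) :=
      mul_le_mul_of_nonneg_left (exp_le_exp.2 (by linarith [ell_pos t])) (le_of_lt ht)
    exact (hle₀ t ⟨ht, ht₁⟩ s ⟨hleft.trans hs.1, hs.2⟩).trans
      (mul_le_mul_of_nonneg_right (le_max_left _ _) hbs)
  · exact (hle₁ t ht₁ s hs).trans (mul_le_mul_of_nonneg_right (le_max_right _ _) hbs)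

theorem le_lintegral_Ioo_div {g : ℝ → ℝ} {m a t : ℝ} (hm : 0 ≤ m) (ht : 0 < t)
    (h : ∀ s ∈ Icc (t * exp (-a)) t, m ≤ g s) :
    ENNReal.ofReal (m * a) ≤ ∫⁻ s in Ioo 0 t, ENNReal.ofReal (g s / s) := by
  have hleft : 0 < t * exp (-a) := mul_pos ht (exp_pos _)
  calc ENNReal.ofReal (m * a)
      = ∫⁻ s in Ioo (t * exp (-a)) t, ENNReal.ofReal (m / s) := by
        rw [lintegral_Ioo_const_div hm hleft ht, log_mul ht.ne' (exp_pos _).ne', log_exp]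
        congr 2
        ring
    _ ≤ ∫⁻ s in Ioo (t * exp (-a)) t, ENNReal.ofReal (g s / s) :=
        setLIntegral_mono' measurableSet_Ioo fun s hs => ENNReal.ofReal_le_ofReal
          (div_le_div_of_nonneg_right (h s (Ioo_subset_Icc_self hs)) (hleft.trans hs.1).le)
    _ ≤ ∫⁻ s in Ioo 0 t, ENNReal.ofReal (g s / s) :=
        lintegral_mono_set (Ioo_subset_Ioo_left hleft.le)

theorem exists_le_lintegral_Ioo_zero_rpow_div {q : ℝ} (hq : 0 ≤ q) (hb : ∀ t ∈ Ioi 0, 0 ≤ b t)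
    (hdec : AlmostDecreasingOn (fun t => t ^ (-ε) * b t) (Ioi 0))
    (hsq : EquivOn (fun t => b (t ^ 2)) b (Ioi 0))
    (h₀ : AlmostIncreasingOn (fun t => ell t ^ δ * b t) (Ioc 0 1))
    (h_inf : AlmostIncreasingOn (fun t => ell t ^ γ * b t) (Ici 1)) :
    ∃ c > (0 : ℝ), ∀ t ∈ Ioi (0 : ℝ),
      ENNReal.ofReal (c * (b t ^ q * ell t))
        ≤ ∫⁻ s in Ioo 0 t, ENNReal.ofReal (b s ^ q / s) := by
  obtain ⟨C, hC, hle⟩ := exists_le_mul_of_mem_Icc_mul_exp_neg hb hdec hsq h₀ h_inf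
  refine ⟨(C ^ q)⁻¹ / 2, by positivity, fun t ht => ?_⟩
  have hbt : 0 ≤ b t := hb t ht
  have hlower : ∀ s ∈ Icc (t * exp (-(ell t / 2))) t, (C ^ q)⁻¹ * b t ^ q ≤ b s ^ q := by
    intro s hs
    have hbs : 0 ≤ b s := hb s ((mul_pos ht (exp_pos _)).trans_le hs.1)
    rw [inv_mul_le_iff₀ (by positivity), ← mul_rpow hC.le hbs]
    exact rpow_le_rpow hbt (hle t ht s hs) hq
  calc ENNReal.ofReal ((C ^ q)⁻¹ / 2 * (b t ^ q * ell t))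
      = ENNReal.ofReal ((C ^ q)⁻¹ * b t ^ q * (ell t / 2)) := by ring_nf
    _ ≤ ∫⁻ s in Ioo 0 t, ENNReal.ofReal (b s ^ q / s) :=
        le_lintegral_Ioo_div (by positivity) ht hlower

end LowerBound

theorem ofReal_mul_rpow_mul_rpow_one_div {M x y q : ℝ} (hM : 0 ≤ M) (hx : 0 ≤ x) (hy : 0 ≤ y)
    (hq : 0 < q) :
    ENNReal.ofReal (M * (x ^ q * y)) ^ (1 / q)
      = ENNReal.ofReal (M ^ (1 / q) * (x * y ^ (1 / q))) := by
  rw [ENNReal.ofReal_rpow_of_nonneg (by positivity) (by positivity), mul_rpow hM (by positivity),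
    mul_rpow (by positivity) hy, ← rpow_mul hx, mul_one_div_cancel hq.ne', rpow_one]

theorem limiting_Lq_norm_near_zero_general {q ε γ δ : ℝ} (hq : 0 < q) {b : ℝ → ℝ}
    (hb : ∀ t ∈ Ioi (0 : ℝ), 0 ≤ b t)
    (hdec : AlmostDecreasingOn (fun t => t ^ (-ε) * b t) (Ioi 0))
    (hsq : EquivOn (fun t => b (t ^ 2)) b (Ioi 0)) (hγ : γ < 1 / q) (hδ : 1 / q < δ)
    (hBinf : AlmostDecreasingOn (fun u => u ^ (-γ) * assocBinf b u) (Ioc 0 1))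
    (hB0 : AlmostIncreasingOn (fun u => u ^ (-δ) * assocB0 b u) (Ioc 0 1)) :
    ∃ c > (0 : ℝ), ∃ C > (0 : ℝ), ∀ t > (0 : ℝ),
      ENNReal.ofReal (c * (b t * ell t ^ (1 / q)))
          ≤ (∫⁻ s in Ioo (0 : ℝ) t, ENNReal.ofReal (b s ^ q / s)) ^ (1 / q) ∧
      (∫⁻ s in Ioo (0 : ℝ) t, ENNReal.ofReal (b s ^ q / s)) ^ (1 / q)
          ≤ ENNReal.ofReal (C * (b t * ell t ^ (1 / q))) := by
  have h₀ := hB0.ell_rpow_mul_of_assocB0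
  have h_inf := hBinf.almostIncreasingOn_ell_rpow_mul
  obtain ⟨c, hc, hlower⟩ := exists_le_lintegral_Ioo_zero_rpow_div hq.le hb hdec hsq h₀ h_inf
  obtain ⟨C, hC, hupper⟩ := exists_lintegral_Ioo_zero_div_le
    (fun t ht => rpow_nonneg (hb t ht) q)
    (h₀.ell_rpow_mul_rpow (fun t ht => hb t ht.1) hq.le) ((div_lt_iff₀ hq).1 hδ)
    (h_inf.ell_rpow_mul_rpow (fun t ht => hb t (one_pos.trans_le (mem_Ici.1 ht))) hq.le)
    ((lt_div_iff₀ hq).1 hγ)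
  refine ⟨c ^ (1 / q), by positivity, C ^ (1 / q), by positivity, fun t ht => ?_⟩
  rw [← ofReal_mul_rpow_mul_rpow_one_div hc.le (hb t ht) (ell_pos t).le hq,
    ← ofReal_mul_rpow_mul_rpow_one_div hC.le (hb t ht) (ell_pos t).le hq]
  exact ⟨ENNReal.rpow_le_rpow (hlower t ht) (by positivity),
    ENNReal.rpow_le_rpow (hupper t ht) (by positivity)⟩

theorem limiting_Lq_norm_near_zero (q : ℝ) (hq : 1 ≤ q) (b : ℝ → ℝ)
    (hb : SlowlyVarying b) (hsq : EquivOn (fun t => b (t ^ 2)) b (Ioi 0))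
    (γ δ : ℝ) (hγ : γ < 1 / q) (hδ : 1 / q < δ)
    (hBinf : AlmostDecreasingOn (fun u => u ^ (-γ) * assocBinf b u) (Ioc 0 1))
    (hB0 : AlmostIncreasingOn (fun u => u ^ (-δ) * assocB0 b u) (Ioc 0 1)) :
    ∃ c > (0:ℝ), ∃ C > (0:ℝ), ∀ t > (0:ℝ),
      ENNReal.ofReal (c * (b t * ell t ^ (1 / q)))
          ≤ (∫⁻ s in Ioo (0:ℝ) t, ENNReal.ofReal (b s ^ q / s)) ^ (1 / q) ∧
      (∫⁻ s in Ioo (0:ℝ) t, ENNReal.ofReal (b s ^ q / s)) ^ (1 / q)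
          ≤ ENNReal.ofReal (C * (b t * ell t ^ (1 / q))) :=
  limiting_Lq_norm_near_zero_general (one_pos.trans_le hq) (fun t ht => (hb.2.1 t ht).le)
    (hb.2.2 1 one_pos).2 hsq hγ hδ hBinf hB0
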